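/- arXiv:2405.05102 — 3 statements merged into one kernel-verified Lean document; each statement's English description precedes it below -/
import Mathlib

section
/- For each integer i ≥ 2, the occupation probabilities of the harmonic descent chain satisfy lim_{n→∞} a(n,i) = 6·h_{i−1} / (π²·(i−1)). -/
open Real Filter Topology MeasureTheory

/-- The harmonic number `h n = ∑_{i=1}^n 1/i`, with `h 0 = 0`. -/
noncomputable def harmonic' (n : ℕ) : ℝ := ∑ i ∈ Finset.Icc 1 n, (1 : ℝ) / i

/-- One-step transition probabilities of the harmonic descent chain,
`p j i = 1/((j-i)·h_{j-1})` for `1 ≤ i < j`. -/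
noncomputable def hdP (j i : ℕ) : ℝ := 1 / (((j : ℝ) - (i : ℝ)) * harmonic' (j - 1))

/-- `b 1 = 1` and `b i = 6 h_{i-1} / (π² (i-1))` for `i ≥ 2`. -/
noncomputable def hdB (i : ℕ) : ℝ :=
  if i = 1 then 1 else 6 * harmonic' (i - 1) / (Real.pi ^ 2 * ((i : ℝ) - 1))

lemma harmonic'_zero : harmonic' 0 = 0 := by simp [harmonic']

lemma harmonic'_succ (n : ℕ) : harmonic' (n + 1) = harmonic' n + 1 / ((n : ℝ) + 1) := by
  unfold harmonic'
  rw [Finset.sum_Icc_succ_top (by omega)]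
  push_cast
  rfl

lemma harmonic'_mono : Monotone harmonic' :=
  monotone_nat_of_le_succ fun n => by
    rw [harmonic'_succ]
    have : (0 : ℝ) < 1 / ((n : ℝ) + 1) := by positivity
    linarith

lemma harmonic'_pos {n : ℕ} (hn : 1 ≤ n) : 0 < harmonic' n := by
  have h1 : harmonic' 1 = 1 := by simp [harmonic']
  have h2 := harmonic'_mono hn
  linarith

/-- The sum of the last `k` terms of the `n`-th harmonic number. -/
noncomputable def harmonicTail (n k : ℕ) : ℝ := harmonic' n - harmonic' (n - k)

lemma harmonicTail_zero (n : ℕ) : harmonicTail n 0 = 0 := by simp [harmonicTail]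

lemma harmonicTail_self (n : ℕ) : harmonicTail n n = harmonic' n := by
  simp [harmonicTail, harmonic'_zero]

lemma harmonicTail_nonneg (n k : ℕ) : 0 ≤ harmonicTail n k :=
  sub_nonneg.2 (harmonic'_mono (Nat.sub_le n k))

lemma harmonicTail_succ_right {n k : ℕ} (hk : k < n) :
    harmonicTail n (k + 1) = harmonicTail n k + 1 / ((n : ℝ) - k) := by
  obtain ⟨d, rfl⟩ := Nat.exists_eq_add_of_lt hk
  have e1 : k + d + 1 - (k + 1) = d := by omega
  have e2 : k + d + 1 - k = d + 1 := by omega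
  have e3 : ((k + d + 1 : ℕ) : ℝ) - k = d + 1 := by push_cast; ring
  rw [harmonicTail, harmonicTail, e1, e2, e3, harmonic'_succ d]
  ring

lemma harmonicTail_succ_left {n k : ℕ} (hk : k ≤ n) :
    harmonicTail (n + 1) k
      = harmonicTail n k - k / (((n : ℝ) + 1) * ((n : ℝ) + 1 - k)) := by
  obtain ⟨d, rfl⟩ := Nat.exists_eq_add_of_le hk
  have e1 : k + d + 1 - k = d + 1 := by omega
  have e2 : k + d - k = d := by omega
  have e3 : ((k + d : ℕ) : ℝ) + 1 - k = d + 1 := by push_cast; ring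
  rw [harmonicTail, harmonicTail, e1, e2, e3, harmonic'_succ, harmonic'_succ]
  push_cast
  have h1 : (d : ℝ) + 1 ≠ 0 := by positivity
  have h2 : (k : ℝ) + d + 1 ≠ 0 := by positivity
  field_simp
  ring

lemma div_succ_le_harmonicTail {n k : ℕ} (hk : k ≤ n) :
    (k : ℝ) / (n + 1) ≤ harmonicTail n k := by
  induction k with
  | zero => simp [harmonicTail_zero]
  | succ k ih =>
    have hkn : (k : ℝ) < n := by exact_mod_cast hk
    have hk0 : (0 : ℝ) ≤ k := k.cast_nonneg
    have h := ih (by omega)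
    have h2 : 1 / ((n : ℝ) + 1) ≤ 1 / ((n : ℝ) - k) :=
      one_div_le_one_div_of_le (by linarith) (by linarith)
    rw [harmonicTail_succ_right hk]
    push_cast
    rw [add_div]
    linarith

lemma tendsto_harmonicTail (k : ℕ) : Tendsto (fun n => harmonicTail n k) atTop (𝓝 0) := by
  induction k with
  | zero => simp [harmonicTail_zero]
  | succ k ih =>
    have h : Tendsto (fun n : ℕ => 1 / ((n : ℝ) - k)) atTop (𝓝 0) := by
      simp only [one_div]
      exact tendsto_inv_atTop_zero.comp
        (tendsto_atTop_add_const_right _ (-(k : ℝ)) tendsto_natCast_atTop_atTop)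
    have h2 := ih.add h
    rw [add_zero] at h2
    refine h2.congr' ?_
    filter_upwards [eventually_gt_atTop k] with n hn
    rw [harmonicTail_succ_right hn]

lemma harmonicTail_mul_div_succ_le {n k : ℕ} (hk : 1 ≤ k) (hkn : k < n) :
    harmonicTail n (k + 1) * ((n : ℝ) + 1 - (k + 1 : ℕ)) / (k + 1 : ℕ)
      ≤ harmonicTail n k * ((n : ℝ) + 1 - k) / k := by
  have hk0 : (0 : ℝ) < k := by exact_mod_cast hk
  have hkn' : (k : ℝ) < n := by exact_mod_cast hkn
  have h := div_succ_le_harmonicTail hkn.le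
  rw [div_le_iff₀ (by positivity)] at h
  rw [harmonicTail_succ_right hkn, div_le_div_iff₀ (by positivity) hk0]
  push_cast
  have e : (harmonicTail n k + 1 / ((n : ℝ) - k)) * ((n : ℝ) + 1 - (k + 1))
      = harmonicTail n k * (n - k) + 1 := by
    have : (n : ℝ) - k ≠ 0 := by linarith
    field_simp
    ring
  rw [e]
  nlinarith

lemma harmonicTail_mul_div_antitone {n s k : ℕ} (hs : 1 ≤ s) (hsk : s ≤ k) (hkn : k ≤ n) :
    harmonicTail n k * ((n : ℝ) + 1 - k) / k ≤ harmonicTail n s * ((n : ℝ) + 1 - s) / s := by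
  induction k, hsk using Nat.le_induction with
  | base => exact le_rfl
  | succ k hk ih =>
    exact (harmonicTail_mul_div_succ_le (hs.trans hk) hkn).trans (ih (by omega))

lemma harmonicTail_succ_mul_le {n s k : ℕ} (hs : 1 ≤ s) (hsk : s ≤ k) (hkn : k ≤ n) :
    harmonicTail (n + 1) k * harmonicTail n s ≤ harmonicTail (n + 1) s * harmonicTail n k := by
  have h := harmonicTail_mul_div_antitone hs hsk hkn
  have hs0 : (0 : ℝ) < s := by exact_mod_cast hs
  have hsk' : (s : ℝ) ≤ k := by exact_mod_cast hsk
  have hkn' : (k : ℝ) ≤ n := by exact_mod_cast hkn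
  have hk1 : (0 : ℝ) < n + 1 - k := by linarith
  have hs1 : (0 : ℝ) < n + 1 - s := by linarith
  have hn1 : (0 : ℝ) < n + 1 := by positivity
  have hk0 : (0 : ℝ) < k := by linarith
  rw [harmonicTail_succ_left hkn, harmonicTail_succ_left (hsk.trans hkn)]
  have key : harmonicTail n k * (s / (((n : ℝ) + 1) * (n + 1 - s)))
      ≤ harmonicTail n s * (k / (((n : ℝ) + 1) * (n + 1 - k))) := by
    have h' := mul_le_mul_of_nonneg_right h
      (by positivity : 0 ≤ (s : ℝ) * k / ((n + 1) * (n + 1 - k) * (n + 1 - s)))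
    refine le_of_eq_of_le ?_ (h'.trans_eq ?_) <;> field_simp
  linarith

lemma sum_sub_succ_mul (u g : ℕ → ℝ) {s m : ℕ} (hsm : s ≤ m) :
    ∑ k ∈ Finset.Ico s m, (u k - u (k + 1)) * g (k + 1)
      = u s * g s + ∑ k ∈ Finset.Ico s m, u k * (g (k + 1) - g k) - u m * g m := by
  induction m, hsm using Nat.le_induction with
  | base => simp
  | succ m hm ih =>
    rw [Finset.sum_Ico_succ_top hm, Finset.sum_Ico_succ_top hm, ih]
    ring

/-- The first-step equation, shifted by one, of a chain started at the state `s`. -/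
def IsHarmonicRenewal (s : ℕ) (u : ℕ → ℝ) : Prop :=
  u s = 1 ∧ ∀ n, s < n → harmonic' n * u n = ∑ j ∈ Finset.Ico s n, u j * (1 / ((n : ℝ) - j))

namespace IsHarmonicRenewal

variable {s : ℕ} {u : ℕ → ℝ}

lemma nonneg (hu : IsHarmonicRenewal s u) {n : ℕ} (hn : s ≤ n) : 0 ≤ u n := by
  induction n using Nat.strong_induction_on with
  | _ n ih =>
    rcases hn.eq_or_lt with rfl | hlt
    · rw [hu.1]
      exact zero_le_one
    · refine nonneg_of_mul_nonneg_right (a := harmonic' n) ?_ (harmonic'_pos (by omega))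
      rw [hu.2 n hlt]
      refine Finset.sum_nonneg fun j hj => ?_
      rw [Finset.mem_Ico] at hj
      have hjn : (j : ℝ) < n := by exact_mod_cast hj.2
      have : (0 : ℝ) < n - j := by linarith
      have := ih j hj.2 hj.1
      positivity

lemma sum_sub_succ_mul_harmonicTail (hu : IsHarmonicRenewal s u) {n : ℕ} (hn : s < n) :
    ∑ k ∈ Finset.Ico s n, (u k - u (k + 1)) * harmonicTail n (k + 1) = harmonicTail n s := by
  rw [sum_sub_succ_mul u (harmonicTail n) hn.le, hu.1, harmonicTail_self, mul_comm (u n),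
    hu.2 n hn]
  have : ∑ k ∈ Finset.Ico s n, u k * (harmonicTail n (k + 1) - harmonicTail n k)
      = ∑ j ∈ Finset.Ico s n, u j * (1 / ((n : ℝ) - j)) :=
    Finset.sum_congr rfl fun k hk => by
      rw [harmonicTail_succ_right (Finset.mem_Ico.1 hk).2]
      ring
  rw [this]
  ring

/-- The sequence is nonincreasing, by an argument in the spirit of Kaluza's theorem. -/
lemma succ_le (hu : IsHarmonicRenewal s u) (hs : 1 ≤ s) {n : ℕ} (hn : s ≤ n) :
    u (n + 1) ≤ u n := by
  induction n using Nat.strong_induction_on with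
  | _ n ih =>
    have h1 := hu.sum_sub_succ_mul_harmonicTail (n := n + 1) (by omega)
    rw [Finset.sum_Ico_succ_top hn, harmonicTail_self] at h1
    have hpos : 0 < harmonic' (n + 1) := harmonic'_pos (by omega)
    suffices h : ∑ k ∈ Finset.Ico s n, (u k - u (k + 1)) * harmonicTail (n + 1) (k + 1)
        ≤ harmonicTail (n + 1) s by
      have : 0 ≤ (u n - u (n + 1)) * harmonic' (n + 1) := by linarith
      linarith [nonneg_of_mul_nonneg_left this hpos]
    rcases hn.eq_or_lt with rfl | hlt
    · simpa using harmonicTail_nonneg _ _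
    · have h0 := hu.sum_sub_succ_mul_harmonicTail hlt
      have hspos : 0 < harmonicTail n s := by
        have hs0 : (0 : ℝ) < s := by exact_mod_cast hs
        exact lt_of_lt_of_le (by positivity) (div_succ_le_harmonicTail hn)
      refine le_of_mul_le_mul_right ?_ hspos
      nth_rewrite 2 [← h0]
      rw [Finset.sum_mul, Finset.mul_sum]
      refine Finset.sum_le_sum fun k hk => ?_
      rw [Finset.mem_Ico] at hk
      have hd : 0 ≤ u k - u (k + 1) := sub_nonneg.2 (ih k hk.2 hk.1)
      have := harmonicTail_succ_mul_le (n := n) hs (by omega : s ≤ k + 1) (by omega)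
      nlinarith [mul_le_mul_of_nonneg_left this hd]

lemma exists_tendsto (hu : IsHarmonicRenewal s u) (hs : 1 ≤ s) :
    ∃ L, Tendsto u atTop (𝓝 L) := by
  have hanti : Antitone fun n => u (n + s) := antitone_nat_of_succ_le fun n => by
    have := hu.succ_le hs (n := n + s) (by omega)
    rwa [show n + 1 + s = n + s + 1 by omega]
  have hbdd : BddBelow (Set.range fun n => u (n + s)) :=
    ⟨0, by rintro _ ⟨n, rfl⟩; exact hu.nonneg (by omega)⟩
  exact ⟨_, (tendsto_add_atTop_iff_nat s).1 (tendsto_atTop_ciInf hanti hbdd)⟩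

/-- Conservation law attached to the invariant weights `1 / j`. -/
lemma sum_mul_harmonicTail_div (hu : IsHarmonicRenewal s u) (hs : 1 ≤ s) {n : ℕ} (hn : s ≤ n) :
    ∑ j ∈ Finset.Ico s (n + 1), u j * (harmonicTail n j / j) = harmonic' s / s := by
  induction n, hn using Nat.le_induction with
  | base => simp [hu.1, harmonicTail_self]
  | succ n hn ih =>
    have hrec := hu.2 (n + 1) (by omega)
    rw [Finset.sum_Ico_succ_top (by omega), harmonicTail_self, ← ih]
    have hsum : ∑ j ∈ Finset.Ico s (n + 1), u j * (harmonicTail (n + 1) j / j)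
        = ∑ j ∈ Finset.Ico s (n + 1), u j * (harmonicTail n j / j)
          - (∑ j ∈ Finset.Ico s (n + 1), u j * (1 / (((n + 1 : ℕ) : ℝ) - j)))
            / ((n : ℝ) + 1) := by
      rw [Finset.sum_div, ← Finset.sum_sub_distrib]
      refine Finset.sum_congr rfl fun j hj => ?_
      rw [Finset.mem_Ico] at hj
      have hjn : (j : ℝ) < n + 1 := by exact_mod_cast hj.2
      have hj0 : (j : ℝ) ≠ 0 := by
        have : j ≠ 0 := by omega
        exact_mod_cast this
      have h1 : (n : ℝ) + 1 - j ≠ 0 := by linarith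
      have h2 : (n : ℝ) + 1 ≠ 0 := by positivity
      rw [harmonicTail_succ_left (by omega)]
      push_cast
      field_simp
    rw [hsum, ← hrec]
    push_cast
    ring

end IsHarmonicRenewal

lemma sum_one_div_sub (n : ℕ) :
    ∑ j ∈ Finset.range n, 1 / ((n : ℝ) - j) = harmonic' n := by
  have h : ∀ k ≤ n, ∑ j ∈ Finset.range k, 1 / ((n : ℝ) - j) = harmonicTail n k := by
    intro k
    induction k with
    | zero => simp [harmonicTail_zero]
    | succ k ih =>
      intro hk
      rw [Finset.sum_range_succ, ih (by omega), harmonicTail_succ_right hk]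
  rw [h n le_rfl, harmonicTail_self]

lemma sum_harmonicTail_div (n : ℕ) :
    ∑ j ∈ Finset.range (n + 1), harmonicTail n j / j
      = ∑ m ∈ Finset.range (n + 1), (1 : ℝ) / (m : ℝ) ^ 2 := by
  induction n with
  | zero => simp
  | succ n ih =>
    rw [Finset.sum_range_succ, Finset.sum_range_succ _ (n + 1), ← ih, harmonicTail_self]
    have hn : (n : ℝ) + 1 ≠ 0 := by positivity
    have hsum : ∑ j ∈ Finset.range (n + 1), harmonicTail (n + 1) j / j
        = ∑ j ∈ Finset.range (n + 1), harmonicTail n j / j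
          - (harmonic' (n + 1) - 1 / ((n : ℝ) + 1)) / (n + 1) := by
      rw [← sum_one_div_sub (n + 1), Finset.sum_range_succ', Finset.sum_range_succ',
        Finset.sum_range_succ' (fun j : ℕ => 1 / (((n + 1 : ℕ) : ℝ) - j))]
      have : ∑ j ∈ Finset.range n, harmonicTail (n + 1) (j + 1) / ((j + 1 : ℕ) : ℝ)
          = ∑ j ∈ Finset.range n, harmonicTail n (j + 1) / ((j + 1 : ℕ) : ℝ)
            - (∑ j ∈ Finset.range n, 1 / (((n + 1 : ℕ) : ℝ) - (j + 1 : ℕ))) / (n + 1) := by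
        rw [Finset.sum_div, ← Finset.sum_sub_distrib]
        refine Finset.sum_congr rfl fun j hj => ?_
        rw [Finset.mem_range] at hj
        have hjn : (j : ℝ) < n := by exact_mod_cast hj
        have h1 : (n : ℝ) + 1 - (j + 1) ≠ 0 := by linarith
        have h2 : (j : ℝ) + 1 ≠ 0 := by positivity
        rw [harmonicTail_succ_left (by omega)]
        push_cast
        field_simp
      rw [this]
      push_cast
      simp
    rw [hsum]
    push_cast
    field_simp
    ring

lemma tendsto_sum_harmonicTail_div :
    Tendsto (fun n => ∑ j ∈ Finset.range (n + 1), harmonicTail n j / j) atTop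
      (𝓝 (π ^ 2 / 6)) := by
  simp only [sum_harmonicTail_div]
  exact (tendsto_add_atTop_iff_nat 1).2 hasSum_zeta_two.tendsto_sum_nat

/-- The Silverman–Toeplitz theorem for nonnegative triangular weights. -/
lemma tendsto_sum_mul_of_tendsto {w : ℕ → ℕ → ℝ} {x : ℕ → ℝ} {W L : ℝ}
    (hw : ∀ n j, 0 ≤ w n j) (hw0 : ∀ j, Tendsto (fun n => w n j) atTop (𝓝 0))
    (hW : Tendsto (fun n => ∑ j ∈ Finset.range (n + 1), w n j) atTop (𝓝 W))
    (hx : Tendsto x atTop (𝓝 L)) :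
    Tendsto (fun n => ∑ j ∈ Finset.range (n + 1), x j * w n j) atTop (𝓝 (L * W)) := by
  suffices h : Tendsto (fun n => ∑ j ∈ Finset.range (n + 1), (x j - L) * w n j) atTop (𝓝 0) by
    have h2 := h.add (hW.const_mul L)
    rw [zero_add] at h2
    refine h2.congr fun n => ?_
    rw [Finset.mul_sum, ← Finset.sum_add_distrib]
    exact Finset.sum_congr rfl fun j _ => by ring
  have hWnn : 0 ≤ W := ge_of_tendsto' hW fun n => Finset.sum_nonneg fun j _ => hw n j
  rw [Metric.tendsto_atTop]
  intro ε hε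
  obtain ⟨δ, hδ, hδε⟩ : ∃ δ > 0, δ * (W + 1) < ε / 2 :=
    ⟨ε / 4 / (W + 1), by positivity, by
      rw [div_mul_cancel₀ _ (by positivity)]
      linarith⟩
  obtain ⟨N, hN⟩ := Metric.tendsto_atTop.1 hx δ hδ
  have hhead : Tendsto (fun n => ∑ j ∈ Finset.range N, |x j - L| * w n j) atTop (𝓝 0) := by
    simpa using tendsto_finsetSum (Finset.range N) fun j _ => (hw0 j).const_mul |x j - L|
  have hev : ∀ᶠ n in atTop, dist (∑ j ∈ Finset.range (n + 1), (x j - L) * w n j) 0 < ε := by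
    filter_upwards [hhead.eventually_lt_const (half_pos hε),
      hW.eventually_lt_const (lt_add_one W), eventually_ge_atTop N] with n h1 h2 hn
    rw [dist_zero_right, Real.norm_eq_abs]
    calc |∑ j ∈ Finset.range (n + 1), (x j - L) * w n j|
        ≤ ∑ j ∈ Finset.range (n + 1), |x j - L| * w n j := by
          refine (Finset.abs_sum_le_sum_abs _ _).trans_eq (Finset.sum_congr rfl fun j _ => ?_)
          rw [abs_mul, abs_of_nonneg (hw n j)]
      _ = ∑ j ∈ Finset.range N, |x j - L| * w n j
          + ∑ j ∈ Finset.Ico N (n + 1), |x j - L| * w n j :=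
          (Finset.sum_range_add_sum_Ico _ (by omega)).symm
      _ ≤ ∑ j ∈ Finset.range N, |x j - L| * w n j
          + ∑ j ∈ Finset.Ico N (n + 1), δ * w n j := by
          gcongr with j hj
          · exact hw n j
          · exact (hN j (Finset.mem_Ico.1 hj).1).le
      _ ≤ ∑ j ∈ Finset.range N, |x j - L| * w n j + δ * (W + 1) := by
          rw [← Finset.mul_sum]
          gcongr
          refine le_trans (Finset.sum_le_sum_of_subset_of_nonneg ?_ fun j _ _ => hw n j) h2.le
          intro j hj
          exact Finset.mem_range.2 (Finset.mem_Ico.1 hj).2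
      _ < ε := by linarith
  exact eventually_atTop.1 hev

lemma IsHarmonicRenewal.tendsto {s : ℕ} {u : ℕ → ℝ} (hu : IsHarmonicRenewal s u)
    (hs : 1 ≤ s) : Tendsto u atTop (𝓝 (6 * harmonic' s / (π ^ 2 * s))) := by
  obtain ⟨L, hL⟩ := hu.exists_tendsto hs
  have hx : Tendsto ((Set.Ici s).indicator u) atTop (𝓝 L) := by
    refine hL.congr' ?_
    filter_upwards [eventually_ge_atTop s] with n hn
    rw [Set.indicator_of_mem (Set.mem_Ici.2 hn)]
  have hlim := tendsto_sum_mul_of_tendsto (w := fun n j => harmonicTail n j / j)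
    (fun n j => div_nonneg (harmonicTail_nonneg n j) j.cast_nonneg)
    (fun j => by simpa using (tendsto_harmonicTail j).div_const (j : ℝ))
    tendsto_sum_harmonicTail_div hx
  have hconst : Tendsto (fun n => ∑ j ∈ Finset.range (n + 1),
      (Set.Ici s).indicator u j * (harmonicTail n j / j)) atTop (𝓝 (harmonic' s / s)) := by
    refine tendsto_const_nhds.congr' ?_
    filter_upwards [eventually_ge_atTop s] with n hn
    rw [← hu.sum_mul_harmonicTail_div hs hn,
      ← Finset.sum_range_add_sum_Ico _ (by omega : s ≤ n + 1),
      Finset.sum_eq_zero (s := Finset.range s), zero_add]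
    · refine Finset.sum_congr rfl fun j hj => ?_
      rw [Set.indicator_of_mem (Set.mem_Ici.2 (Finset.mem_Ico.1 hj).1)]
    · intro j hj
      rw [Set.indicator_of_notMem (by simpa using hj), zero_mul]
  have heq := tendsto_nhds_unique hlim hconst
  have hs0 : (s : ℝ) ≠ 0 := by
    have : s ≠ 0 := by omega
    exact_mod_cast this
  convert hL using 2
  rw [mul_div_assoc', div_eq_div_iff (by norm_num) hs0] at heq
  field_simp
  linarith

/-- Occupation probabilities defined by decomposing at the last step before reaching `i` also
satisfy the equation obtained by decomposing at the first step. -/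
lemma eq_sum_first_step {R : Type*} [CommSemiring R] {a p : ℕ → ℕ → R}
    (ha_diag : ∀ n : ℕ, 1 ≤ n → a n n = 1)
    (ha_rec : ∀ n i : ℕ, 1 ≤ i → i < n → a n i = ∑ j ∈ Finset.Ioc i n, a n j * p j i)
    {n i : ℕ} (hi : 1 ≤ i) (hin : i < n) :
    a n i = ∑ k ∈ Finset.Ico i n, p n k * a k i := by
  induction hd : n - i using Nat.strong_induction_on generalizing i with
  | _ d ih =>
    have hIoc : Finset.Ioc i n = insert n (Finset.Ioo i n) := (Finset.Ioo_insert_right hin).symm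
    have hIco : Finset.Ico i n = insert i (Finset.Ioo i n) := (Finset.Ioo_insert_left hin).symm
    rw [ha_rec n i hi hin, hIoc, hIco, Finset.sum_insert (by simp), Finset.sum_insert (by simp),
      ha_diag n (by omega), ha_diag i hi, one_mul, mul_one]
    congr 1
    calc ∑ j ∈ Finset.Ioo i n, a n j * p j i
        = ∑ j ∈ Finset.Ioo i n, ∑ k ∈ Finset.Ico j n, p n k * (a k j * p j i) := by
          refine Finset.sum_congr rfl fun j hj => ?_
          rw [Finset.mem_Ioo] at hj
          rw [ih (n - j) (by omega) (by omega) hj.2 rfl, Finset.sum_mul]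
          exact Finset.sum_congr rfl fun k _ => mul_assoc _ _ _
      _ = ∑ k ∈ Finset.Ioo i n, ∑ j ∈ Finset.Ioc i k, p n k * (a k j * p j i) := by
          refine Finset.sum_comm' fun j k => ?_
          simp only [Finset.mem_Ioo, Finset.mem_Ico, Finset.mem_Ioc]
          omega
      _ = ∑ k ∈ Finset.Ioo i n, p n k * a k i := by
          refine Finset.sum_congr rfl fun k hk => ?_
          rw [ha_rec k i hi (Finset.mem_Ioo.1 hk).1, Finset.mul_sum]

theorem hd_occupation_limit
    (a : ℕ → ℕ → ℝ)
    (ha_diag : ∀ n : ℕ, 1 ≤ n → a n n = 1)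
    (ha_rec : ∀ n i : ℕ, 1 ≤ i → i < n →
      a n i = ∑ j ∈ Finset.Ioc i n, a n j * hdP j i)
    (i : ℕ) (hi : 2 ≤ i) :
    Filter.Tendsto (fun n => a n i) Filter.atTop
      (𝓝 (6 * harmonic' (i - 1) / (Real.pi ^ 2 * ((i : ℝ) - 1)))) := by
  obtain ⟨s, rfl⟩ : ∃ s, i = s + 1 := ⟨i - 1, by omega⟩
  have hu : IsHarmonicRenewal s fun n => a (n + 1) (s + 1) := by
    refine ⟨ha_diag _ (by omega), fun n hn => ?_⟩
    have hpos : harmonic' n ≠ 0 := (harmonic'_pos (by omega)).ne'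
    beta_reduce
    rw [eq_sum_first_step ha_diag ha_rec (by omega) (by omega : s + 1 < n + 1),
      ← Finset.sum_Ico_add', Finset.mul_sum]
    refine Finset.sum_congr rfl fun j hj => ?_
    have hjn : (j : ℝ) < n := by exact_mod_cast (Finset.mem_Ico.1 hj).2
    have h1 : (n : ℝ) - j ≠ 0 := by linarith
    rw [hdP, Nat.add_sub_cancel]
    push_cast
    rw [add_sub_add_right_eq_sub]
    field_simp
  rw [← tendsto_add_atTop_iff_nat 1]
  simpa using hu.tendsto (by omega)
end

section
/- For every integer i ≥ 1, the limit a(i) := lim_{n→∞} a(n,i) (which exists) equals b(i); in particular a(1) = 1 and a(i) = 6·h_{i−1}/(π²·(i−1)) for i ≥ 2. -/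
open Real Filter Topology MeasureTheory

lemma sum_one_div_sub_eq_harmonic' {n : ℕ} (hn : 1 ≤ n) :
    ∑ k ∈ Finset.Ico 1 n, 1 / ((n : ℝ) - k) = harmonic' (n - 1) := by
  refine Finset.sum_bij' (fun k _ => n - k) (fun k _ => n - k) ?_ ?_ ?_ ?_ ?_
  all_goals intro k hk
  all_goals simp only [Finset.mem_Ico, Finset.mem_Icc] at *
  any_goals omega
  rw [Nat.cast_sub (by omega)]

lemma hasSum_one_div_mul_succ {d : ℝ} (hd : 0 < d) :
    HasSum (fun m : ℕ => 1 / ((d + m) * (d + m + 1))) (1 / d) := by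
  rw [hasSum_iff_tendsto_nat_of_nonneg (fun m => by positivity)]
  have key : ∀ N : ℕ, ∑ m ∈ Finset.range N, 1 / ((d + m) * (d + m + 1)) = 1 / d - 1 / (d + N) := by
    intro N
    induction N with
    | zero => simp
    | succ N ih =>
      rw [Finset.sum_range_succ, ih]
      push_cast
      field_simp
      ring
  simp only [key]
  have h : Tendsto (fun N : ℕ => 1 / (d + (N : ℝ))) atTop (𝓝 0) := by
    simp only [one_div]
    exact (tendsto_atTop_add_const_left _ d tendsto_natCast_atTop_atTop).inv_tendsto_atTop
  simpa using h.const_sub (1 / d)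

lemma hasSum_one_div_sub_one_div_add (s : ℕ) :
    HasSum (fun m : ℕ => 1 / ((m : ℝ) + 1) - 1 / ((m : ℝ) + 1 + s)) (harmonic' s) := by
  induction s with
  | zero => simp [harmonic']
  | succ s ih =>
    rw [harmonic'_succ]
    convert ih.add (hasSum_one_div_mul_succ (d := (s : ℝ) + 1) (by positivity)) using 2 with m
    push_cast
    field_simp
    ring

/-- The probability that the stationary chain with occupation probabilities `hdB` enters
`{1, …, n - 1}` at the state `k`. -/
noncomputable def hdEntry (n k : ℕ) : ℝ :=
  ∑' m : ℕ, 6 / π ^ 2 * (1 / (((n : ℝ) - 1 + m) * ((n : ℝ) - k + m)))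

lemma hdEntry_term_le {n k : ℕ} (hk : 1 ≤ k) (hkn : k < n) (m : ℕ) :
    6 / π ^ 2 * (1 / (((n : ℝ) - 1 + m) * ((n : ℝ) - k + m))) ≤
      6 / π ^ 2 * (2 * (1 / (((n : ℝ) - k + m) * ((n : ℝ) - k + m + 1)))) := by
  have hk' : (1 : ℝ) ≤ k := by exact_mod_cast hk
  have hd : (1 : ℝ) ≤ (n : ℝ) - k := by
    have : (k : ℝ) + 1 ≤ n := by exact_mod_cast hkn
    linarith
  have hm : (0 : ℝ) ≤ m := m.cast_nonneg
  set d : ℝ := (n : ℝ) - k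
  have hn : d ≤ (n : ℝ) - 1 := by simp only [d]; linarith
  gcongr
  rw [mul_one_div, div_le_div_iff₀ (by nlinarith) (by positivity)]
  have : 0 ≤ (d + m) * ((n : ℝ) - 1 - d) := by apply mul_nonneg <;> linarith
  have : 0 ≤ (d + m) * (d + m - 1) := by apply mul_nonneg <;> linarith
  nlinarith

lemma hdEntry_term_nonneg {n k : ℕ} (hk : 1 ≤ k) (hkn : k < n) (m : ℕ) :
    0 ≤ 6 / π ^ 2 * (1 / (((n : ℝ) - 1 + m) * ((n : ℝ) - k + m))) := by
  have hk' : (1 : ℝ) ≤ k := by exact_mod_cast hk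
  have hd : (k : ℝ) + 1 ≤ n := by exact_mod_cast hkn
  have h₁ : 0 ≤ (n : ℝ) - 1 + m := by linarith [m.cast_nonneg (α := ℝ)]
  have h₂ : 0 ≤ (n : ℝ) - k + m := by linarith [m.cast_nonneg (α := ℝ)]
  positivity

lemma hasSum_hdEntry_bound {n k : ℕ} (hkn : k < n) :
    HasSum (fun m : ℕ => 6 / π ^ 2 * (2 * (1 / (((n : ℝ) - k + m) * ((n : ℝ) - k + m + 1)))))
      (6 / π ^ 2 * (2 * (1 / ((n : ℝ) - k)))) :=
  ((hasSum_one_div_mul_succ (sub_pos.2 (by exact_mod_cast hkn))).mul_left 2).mul_left _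

lemma summable_hdEntry {n k : ℕ} (hk : 1 ≤ k) (hkn : k < n) :
    Summable (fun m : ℕ => 6 / π ^ 2 * (1 / (((n : ℝ) - 1 + m) * ((n : ℝ) - k + m)))) :=
  Summable.of_nonneg_of_le (hdEntry_term_nonneg hk hkn) (hdEntry_term_le hk hkn)
    (hasSum_hdEntry_bound hkn).summable

lemma hdEntry_nonneg {n k : ℕ} (hk : 1 ≤ k) (hkn : k < n) : 0 ≤ hdEntry n k :=
  tsum_nonneg (hdEntry_term_nonneg hk hkn)

lemma hdEntry_le {n k : ℕ} (hk : 1 ≤ k) (hkn : k < n) :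
    hdEntry n k ≤ 6 / π ^ 2 * (2 * (1 / ((n : ℝ) - k))) := by
  rw [← (hasSum_hdEntry_bound hkn).tsum_eq]
  exact (summable_hdEntry hk hkn).tsum_le_tsum (hdEntry_term_le hk hkn)
    (hasSum_hdEntry_bound hkn).summable

lemma hdEntry_eq_add {n k : ℕ} (hk : 1 ≤ k) (hkn : k < n) :
    hdEntry n k = hdB n * hdP n k + hdEntry (n + 1) k := by
  unfold hdEntry
  rw [(summable_hdEntry hk hkn).tsum_eq_zero_add]
  congr 1
  · have h := (harmonic'_pos (n := n - 1) (by omega)).ne'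
    have h₁ : (n : ℝ) - 1 ≠ 0 := by
      have : (1 : ℝ) < n := by exact_mod_cast (by omega : 1 < n)
      linarith
    have h₂ : (n : ℝ) - k ≠ 0 := by
      have : (k : ℝ) < n := by exact_mod_cast hkn
      linarith
    rw [hdB, if_neg (by omega), hdP]
    simp only [Nat.cast_zero, add_zero]
    field_simp
  · congr 1
    ext m
    push_cast
    ring_nf

lemma hdEntry_succ_self {k : ℕ} (hk : 1 ≤ k) : hdEntry (k + 1) k = hdB k := by
  unfold hdEntry hdB
  split_ifs with h
  · subst h
    have hz : HasSum (fun m : ℕ => 1 / ((m : ℝ) + 1) ^ 2) (π ^ 2 / 6) := by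
      have := (hasSum_nat_add_iff' 1).2 hasSum_zeta_two
      simpa using this
    have hπ := Real.pi_ne_zero
    convert (hz.mul_left (6 / π ^ 2)).tsum_eq using 1
    · congr 1
      ext m
      push_cast
      ring_nf
    · field_simp
  · obtain ⟨s, rfl⟩ : ∃ s, k = s + 1 := ⟨k - 1, by omega⟩
    have hs : (0 : ℝ) < s := by exact_mod_cast (by omega : 0 < s)
    have hπ := Real.pi_ne_zero
    convert ((hasSum_one_div_sub_one_div_add s).mul_left (6 / (π ^ 2 * s))).tsum_eq using 1
    · congr 1
      ext m
      push_cast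
      rw [show (s : ℝ) + 1 + 1 - 1 + m = m + 1 + s by ring,
        show (s : ℝ) + 1 + 1 - (s + 1) + m = m + 1 by ring]
      field_simp
      ring
    · simp only [Nat.add_sub_cancel]
      push_cast
      rw [add_sub_cancel_right]
      ring

/-- A function is harmonic for the harmonic descent chain above level `i`. -/
def HDHarmonicAbove (i : ℕ) (f : ℕ → ℝ) : Prop :=
  ∀ n, i < n → f n = ∑ k ∈ Finset.Ico 1 n, hdP n k * f k

lemma sum_hdP {n : ℕ} (hn : 2 ≤ n) : ∑ k ∈ Finset.Ico 1 n, hdP n k = 1 := by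
  have h := (harmonic'_pos (n := n - 1) (by omega)).ne'
  have : ∀ k, hdP n k = 1 / ((n : ℝ) - k) * (harmonic' (n - 1))⁻¹ := by
    intro k
    rw [hdP]
    field_simp
  simp only [this]
  rw [← Finset.sum_mul, sum_one_div_sub_eq_harmonic' (by omega), mul_inv_cancel₀ h]

lemma hdP_nonneg {n k : ℕ} (hkn : k < n) : 0 ≤ hdP n k := by
  have : (k : ℝ) < n := by exact_mod_cast hkn
  have h : 0 ≤ harmonic' (n - 1) := Finset.sum_nonneg fun k _ => by positivity
  exact one_div_nonneg.2 (mul_nonneg (by linarith) h)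

lemma HDHarmonicAbove.neg {i : ℕ} {f : ℕ → ℝ} (hf : HDHarmonicAbove i f) :
    HDHarmonicAbove i (fun n => -f n) := by
  intro n hn
  simp [hf n hn]

lemma HDHarmonicAbove.sum_sub_div_eq_zero {i : ℕ} (hi : 1 ≤ i) {f : ℕ → ℝ}
    (hf : HDHarmonicAbove i f) {n : ℕ} (hn : i < n) :
    ∑ k ∈ Finset.Ico 1 n, (f n - f k) * (1 / ((n : ℝ) - k)) = 0 := by
  have h := (harmonic'_pos (n := n - 1) (by omega)).ne'
  have hk : ∀ k, (f n - f k) * (1 / ((n : ℝ) - k)) =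
      harmonic' (n - 1) * (hdP n k * f n - hdP n k * f k) := by
    intro k
    rw [hdP]
    field_simp
  simp only [hk]
  rw [← Finset.mul_sum, Finset.sum_sub_distrib, ← Finset.sum_mul, sum_hdP (by omega), ← hf n hn]
  ring

lemma HDHarmonicAbove.sum_hdEntry_mul {i : ℕ} (hi : 1 ≤ i) {f : ℕ → ℝ}
    (hf : HDHarmonicAbove i f) {n : ℕ} (hn : i < n) :
    ∑ k ∈ Finset.Ico 1 n, hdEntry n k * f k =
      ∑ k ∈ Finset.Ico 1 (i + 1), hdEntry (i + 1) k * f k := by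
  induction n, hn using Nat.le_induction with
  | base => rfl
  | succ n hn ih =>
    have hn' : i < n := hn
    rw [← ih, Finset.sum_Ico_succ_top (by omega), hdEntry_succ_self (by omega), hf n hn',
      Finset.mul_sum, ← Finset.sum_add_distrib]
    refine Finset.sum_congr rfl fun k hk => ?_
    rw [Finset.mem_Ico] at hk
    rw [hdEntry_eq_add hk.1 hk.2]
    ring

lemma sum_hdEntry {n : ℕ} (hn : 2 ≤ n) : ∑ k ∈ Finset.Ico 1 n, hdEntry n k = 1 := by
  have hf : HDHarmonicAbove 1 (fun _ => 1) := fun n hn => by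
    simpa using (sum_hdP hn).symm
  simpa [hdEntry_succ_self (le_refl 1), hdB] using hf.sum_hdEntry_mul le_rfl hn

lemma log_sub_log_le {x y : ℝ} (hx : 0 < x) (hxy : x ≤ y) :
    Real.log y - Real.log x ≤ (y - x) / (√x * √y) := by
  have hy : 0 < y := hx.trans_le hxy
  have hsx := Real.sqrt_pos.2 hx
  have hsy := Real.sqrt_pos.2 hy
  have hle : 0 ≤ Real.log (√y / √x) :=
    Real.log_nonneg ((one_le_div hsx).2 (Real.sqrt_le_sqrt hxy))
  have h := Real.self_le_sinh_iff.2 hle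
  rw [Real.sinh_log (by positivity), Real.log_div hsy.ne' hsx.ne', Real.log_sqrt hy.le,
    Real.log_sqrt hx.le] at h
  have h' : (y - x) / (√x * √y) = √y / √x - (√y / √x)⁻¹ := by
    have hx' := Real.sq_sqrt hx.le
    have hy' := Real.sq_sqrt hy.le
    field_simp
    rw [hx', hy']
  linarith

lemma sum_one_div_sqrt_le (n : ℕ) : ∑ k ∈ Finset.Ico 1 (n + 1), 1 / √(k : ℝ) ≤ 2 * √(n : ℝ) := by
  induction n with
  | zero => simp
  | succ n ih =>
    rw [Finset.sum_Ico_succ_top (by omega)]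
    have ht : 0 < √((n + 1 : ℕ) : ℝ) := Real.sqrt_pos.2 (by positivity)
    have hs := Real.sq_sqrt (Nat.cast_nonneg (α := ℝ) n)
    have ht' := Real.sq_sqrt (Nat.cast_nonneg (α := ℝ) (n + 1))
    have h : 1 / √((n + 1 : ℕ) : ℝ) ≤ 2 * √((n + 1 : ℕ) : ℝ) - 2 * √(n : ℝ) := by
      rw [div_le_iff₀ ht]
      push_cast at ht' ⊢
      nlinarith [sq_nonneg (√((n : ℝ) + 1) - √(n : ℝ))]
    linarith

lemma sum_log_sub_log_div_le {n : ℕ} (hn : 1 ≤ n) :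
    ∑ k ∈ Finset.Ico 1 n, (Real.log n - Real.log k) * (1 / ((n : ℝ) - k)) ≤ 2 := by
  have hn' : (0 : ℝ) < n := by exact_mod_cast hn
  have hs := Real.sqrt_pos.2 hn'
  calc ∑ k ∈ Finset.Ico 1 n, (Real.log n - Real.log k) * (1 / ((n : ℝ) - k))
      ≤ ∑ k ∈ Finset.Ico 1 n, 1 / √(k : ℝ) * (1 / √(n : ℝ)) := by
        refine Finset.sum_le_sum fun k hk => ?_
        rw [Finset.mem_Ico] at hk
        have hk₀ : (0 : ℝ) < k := by exact_mod_cast hk.1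
        have hkn : (k : ℝ) < n := by exact_mod_cast hk.2
        have hd : 0 < (n : ℝ) - k := by linarith
        have h := log_sub_log_le hk₀ hkn.le
        rw [mul_one_div, div_le_iff₀ hd]
        refine h.trans (le_of_eq ?_)
        have := Real.sqrt_pos.2 hk₀
        field_simp
    _ = (∑ k ∈ Finset.Ico 1 n, 1 / √(k : ℝ)) * (1 / √(n : ℝ)) := by rw [Finset.sum_mul]
    _ ≤ 2 * √(n : ℝ) * (1 / √(n : ℝ)) := by
        gcongr
        refine le_trans ?_ (sum_one_div_sqrt_le n)
        exact Finset.sum_le_sum_of_subset_of_nonneg (Finset.Ico_subset_Ico_right n.le_succ)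
          fun k _ _ => by positivity
    _ = 2 := by field_simp

/-- At a record of `f + ε log`, a harmonic function `f` is close to its entrance average. -/
lemma HDHarmonicAbove.le_add_of_record {i : ℕ} (hi : 1 ≤ i) {f : ℕ → ℝ}
    (hf : HDHarmonicAbove i f) {n : ℕ} (hn : i < n) {ε : ℝ} (hε : 0 ≤ ε)
    (hrec : ∀ k, 1 ≤ k → k < n → f k + ε * Real.log k ≤ f n + ε * Real.log n) :
    f n ≤ ∑ k ∈ Finset.Ico 1 n, hdEntry n k * f k + 48 / π ^ 2 * ε := by
  have hlog : ∀ k, 1 ≤ k → k < n → 0 ≤ ε * (Real.log n - Real.log k) := by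
    intro k hk hkn
    have hk₀ : (0 : ℝ) < k := by exact_mod_cast hk
    have hkn' : (k : ℝ) ≤ n := by exact_mod_cast hkn.le
    exact mul_nonneg hε (sub_nonneg.2 (Real.log_le_log hk₀ hkn'))
  have h₁ : f n - ∑ k ∈ Finset.Ico 1 n, hdEntry n k * f k =
      ∑ k ∈ Finset.Ico 1 n, hdEntry n k * (f n - f k) := by
    simp only [mul_sub, Finset.sum_sub_distrib]
    rw [← Finset.sum_mul, sum_hdEntry (by omega), one_mul]
  have h₂ : ∑ k ∈ Finset.Ico 1 n, hdEntry n k * (f n - f k) ≤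
      ∑ k ∈ Finset.Ico 1 n, 12 / π ^ 2 * ((f n - f k) * (1 / ((n : ℝ) - k)) +
        2 * ε * ((Real.log n - Real.log k) * (1 / ((n : ℝ) - k)))) := by
    refine Finset.sum_le_sum fun k hk => ?_
    rw [Finset.mem_Ico] at hk
    have hl := hlog k hk.1 hk.2
    have hr := hrec k hk.1 hk.2
    calc hdEntry n k * (f n - f k)
        ≤ hdEntry n k * ((f n - f k) + 2 * (ε * (Real.log n - Real.log k))) :=
          mul_le_mul_of_nonneg_left (by linarith) (hdEntry_nonneg hk.1 hk.2)
      _ ≤ 6 / π ^ 2 * (2 * (1 / ((n : ℝ) - k))) *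
            ((f n - f k) + 2 * (ε * (Real.log n - Real.log k))) :=
          mul_le_mul_of_nonneg_right (hdEntry_le hk.1 hk.2) (by linarith)
      _ = _ := by ring
  rw [← Finset.mul_sum, Finset.sum_add_distrib, ← Finset.mul_sum,
    hf.sum_sub_div_eq_zero hi hn] at h₂
  have h₃ : 12 / π ^ 2 * (0 + 2 * ε * ∑ k ∈ Finset.Ico 1 n,
      (Real.log n - Real.log k) * (1 / ((n : ℝ) - k))) ≤ 12 / π ^ 2 * (0 + 2 * ε * 2) := by
    gcongr
    exact sum_log_sub_log_div_le (by omega)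
  have h₄ : 12 / π ^ 2 * (0 + 2 * ε * 2) = 48 / π ^ 2 * ε := by ring
  linarith

lemma HDHarmonicAbove.eventually_le {i : ℕ} (hi : 1 ≤ i) {f : ℕ → ℝ}
    (hf : HDHarmonicAbove i f) {K B : ℝ} (hK : ∀ n, 1 ≤ n → |f n| ≤ K)
    (hB : ∀ n, i < n → ∑ k ∈ Finset.Ico 1 n, hdEntry n k * f k = B) {δ : ℝ} (hδ : 0 < δ) :
    ∀ᶠ n in atTop, f n ≤ B + δ := by
  obtain ⟨ε, hε, hεδ⟩ : ∃ ε : ℝ, 0 < ε ∧ 48 / π ^ 2 * ε = δ := by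
    have hπ := Real.pi_pos
    exact ⟨δ * π ^ 2 / 48, by positivity, by field_simp⟩
  have hlim : Tendsto (fun n : ℕ => ε * Real.log n) atTop atTop :=
    (Real.tendsto_log_atTop.comp tendsto_natCast_atTop_atTop).const_mul_atTop hε
  filter_upwards [hlim.eventually_gt_atTop (2 * K + ε * Real.log i), eventually_ge_atTop 1]
    with n hn hn₁
  obtain ⟨r, hr, hmax⟩ := Finset.exists_max_image (Finset.Icc 1 n)
    (fun k => f k + ε * Real.log k) ⟨1, Finset.mem_Icc.2 ⟨le_rfl, hn₁⟩⟩
  rw [Finset.mem_Icc] at hr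
  have hnr := hmax n (Finset.mem_Icc.2 ⟨hn₁, le_rfl⟩)
  have hr₀ : (0 : ℝ) < r := by exact_mod_cast hr.1
  have hir : i < r := by
    by_contra! hle
    have h₁ : ε * Real.log r ≤ ε * Real.log i :=
      mul_le_mul_of_nonneg_left (Real.log_le_log hr₀ (by exact_mod_cast hle)) hε.le
    have h₂ := abs_le.1 (hK n hn₁)
    have h₃ := abs_le.1 (hK r hr.1)
    linarith
  have hrec := hf.le_add_of_record hi hir hε.le fun k hk hkr =>
    hmax k (Finset.mem_Icc.2 ⟨hk, by omega⟩)
  rw [hB r hir, hεδ] at hrec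
  have hrn : ε * Real.log r ≤ ε * Real.log n :=
    mul_le_mul_of_nonneg_left (Real.log_le_log hr₀ (by exact_mod_cast hr.2)) hε.le
  linarith

lemma HDHarmonicAbove.tendsto {i : ℕ} (hi : 1 ≤ i) {f : ℕ → ℝ}
    (hf : HDHarmonicAbove i f) {K B : ℝ} (hK : ∀ n, 1 ≤ n → |f n| ≤ K)
    (hB : ∀ n, i < n → ∑ k ∈ Finset.Ico 1 n, hdEntry n k * f k = B) :
    Tendsto f atTop (𝓝 B) := by
  rw [Metric.tendsto_nhds]
  intro δ hδ
  have hneg := hf.neg.eventually_le hi (K := K) (B := -B) (fun n hn => by simpa using hK n hn)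
    (fun n hn => by simpa using hB n hn) (half_pos hδ)
  filter_upwards [hf.eventually_le hi hK hB (half_pos hδ), hneg] with n h₁ h₂
  rw [Real.dist_eq, abs_lt]
  constructor <;> linarith

lemma HDHarmonicAbove.abs_le {i : ℕ} (hi : 1 ≤ i) {f : ℕ → ℝ} (hf : HDHarmonicAbove i f)
    {K : ℝ} (hK : ∀ n, 1 ≤ n → n ≤ i → |f n| ≤ K) {n : ℕ} (hn : 1 ≤ n) : |f n| ≤ K := by
  induction n using Nat.strong_induction_on with
  | _ n ih =>
    rcases le_or_gt n i with hni | hni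
    · exact hK n hn hni
    · rw [hf n hni]
      calc |∑ k ∈ Finset.Ico 1 n, hdP n k * f k|
          ≤ ∑ k ∈ Finset.Ico 1 n, |hdP n k * f k| := Finset.abs_sum_le_sum_abs _ _
        _ ≤ ∑ k ∈ Finset.Ico 1 n, hdP n k * K := by
            refine Finset.sum_le_sum fun k hk => ?_
            rw [Finset.mem_Ico] at hk
            rw [abs_mul, abs_of_nonneg (hdP_nonneg hk.2)]
            exact mul_le_mul_of_nonneg_left (ih k hk.2 hk.1) (hdP_nonneg hk.2)
        _ = K := by rw [← Finset.sum_mul, sum_hdP (by omega), one_mul]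

/-- The first-step decomposition of the occupation probabilities. -/
lemma occupation_eq_sum_first_step (a : ℕ → ℕ → ℝ) (ha_diag : ∀ n : ℕ, 1 ≤ n → a n n = 1)
    (ha_rec : ∀ n i : ℕ, 1 ≤ i → i < n → a n i = ∑ j ∈ Finset.Ioc i n, a n j * hdP j i)
    {n i : ℕ} (hi : 1 ≤ i) (hin : i < n) :
    a n i = ∑ k ∈ Finset.Ico i n, hdP n k * a k i := by
  induction hd : n - i using Nat.strong_induction_on generalizing i with
  | _ d ih =>
    have hIoc : Finset.Ioc i n = insert n (Finset.Ioo i n) := by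
      ext j; simp only [Finset.mem_Ioc, Finset.mem_insert, Finset.mem_Ioo]; omega
    have hIco : Finset.Ico i n = insert i (Finset.Ioo i n) := by
      ext j; simp only [Finset.mem_Ico, Finset.mem_insert, Finset.mem_Ioo]; omega
    rw [ha_rec n i hi hin, hIoc, hIco, Finset.sum_insert (by simp), Finset.sum_insert (by simp),
      ha_diag n (by omega), ha_diag i hi, one_mul, mul_one]
    congr 1
    calc ∑ j ∈ Finset.Ioo i n, a n j * hdP j i
        = ∑ j ∈ Finset.Ioo i n, ∑ k ∈ Finset.Ico j n, hdP n k * a k j * hdP j i := by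
          refine Finset.sum_congr rfl fun j hj => ?_
          rw [Finset.mem_Ioo] at hj
          rw [ih (n - j) (by omega) (by omega) hj.2 rfl, Finset.sum_mul]
      _ = ∑ k ∈ Finset.Ioo i n, ∑ j ∈ Finset.Ioc i k, hdP n k * a k j * hdP j i := by
          refine Finset.sum_comm' fun j k => ?_
          simp only [Finset.mem_Ioo, Finset.mem_Ico, Finset.mem_Ioc]
          omega
      _ = ∑ k ∈ Finset.Ioo i n, hdP n k * a k i := by
          refine Finset.sum_congr rfl fun k hk => ?_
          rw [Finset.mem_Ioo] at hk
          rw [ha_rec k i hi hk.1, Finset.mul_sum]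
          exact Finset.sum_congr rfl fun j _ => by ring

theorem hd_occupation_limit_eq_b
    (a : ℕ → ℕ → ℝ)
    (ha_diag : ∀ n : ℕ, 1 ≤ n → a n n = 1)
    (ha_rec : ∀ n i : ℕ, 1 ≤ i → i < n →
      a n i = ∑ j ∈ Finset.Ioc i n, a n j * hdP j i)
    (i : ℕ) (hi : 1 ≤ i) :
    Filter.Tendsto (fun n => a n i) Filter.atTop (𝓝 (hdB i)) := by
  set f : ℕ → ℝ := fun n => if i ≤ n then a n i else 0 with hf_def
  have hlow : ∀ n, n < i → f n = 0 := fun n hn => if_neg (by omega)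
  have hhigh : ∀ n, i ≤ n → f n = a n i := fun n hn => if_pos hn
  have hself : f i = 1 := (hhigh i le_rfl).trans (ha_diag i hi)
  have hf : HDHarmonicAbove i f := by
    intro n hn
    rw [hhigh n hn.le, occupation_eq_sum_first_step a ha_diag ha_rec hi hn]
    have hsub : Finset.Ico i n ⊆ Finset.Ico 1 n := Finset.Ico_subset_Ico_left hi
    rw [← Finset.sum_subset hsub]
    · refine Finset.sum_congr rfl fun k hk => ?_
      rw [hhigh k (Finset.mem_Ico.1 hk).1]
    · intro k hk hk'
      rw [Finset.mem_Ico] at hk hk'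
      rw [hlow k (by omega), mul_zero]
  have hbound : ∀ n, 1 ≤ n → |f n| ≤ 1 := fun n hn => by
    refine hf.abs_le hi (fun m _ hmi => ?_) hn
    rcases hmi.lt_or_eq with h | rfl
    · simp [hlow m h]
    · simp [hself]
  have hB : ∀ n, i < n → ∑ k ∈ Finset.Ico 1 n, hdEntry n k * f k = hdB i := by
    intro n hn
    rw [hf.sum_hdEntry_mul hi hn, Finset.sum_Ico_succ_top hi, hself, mul_one,
      hdEntry_succ_self hi, Finset.sum_eq_zero, zero_add]
    intro k hk
    rw [hlow k (Finset.mem_Ico.1 hk).2, mul_zero]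
  refine (hf.tendsto hi hbound hB).congr' ?_
  filter_upwards [eventually_ge_atTop i] with n hn using hhigh n hn
end

section
/- There exists a constant C < ∞ such that for all integers n ≥ 2, |Σ_{i=2}^n a(n,i)/h_{i−1} − (6/π²)·log n| ≤ C. -/
open Real Filter Topology MeasureTheory

lemma harmonic'_nonneg (n : ℕ) : 0 ≤ harmonic' n :=
  Finset.sum_nonneg fun _ _ => by positivity

lemma one_le_harmonic' {n : ℕ} (hn : 1 ≤ n) : 1 ≤ harmonic' n := by
  have h := Finset.single_le_sum (f := fun i : ℕ => (1 : ℝ) / i) (fun i _ => by positivity)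
    (Finset.mem_Icc.2 ⟨le_rfl, hn⟩)
  simpa [harmonic'] using h

lemma harmonic'_eq_sum_range (n : ℕ) :
    harmonic' n = ∑ k ∈ Finset.range n, 1 / ((k : ℝ) + 1) := by
  induction n with
  | zero => simp [harmonic'_zero]
  | succ n ih => rw [harmonic'_succ, Finset.sum_range_succ, ih]

lemma harmonic'_eq_harmonic (n : ℕ) : harmonic' n = (harmonic n : ℝ) := by
  simp [harmonic'_eq_sum_range, harmonic]

lemma sum_range_reflect_sub (g : ℕ → ℝ → ℝ) (n : ℕ) :
    ∑ l ∈ Finset.range n, g l ((n : ℝ) - l) =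
      ∑ k ∈ Finset.range n, g (n - 1 - k) ((k : ℝ) + 1) := by
  rw [← Finset.sum_range_reflect]
  refine Finset.sum_congr rfl fun k hk => ?_
  have hk := Finset.mem_range.1 hk
  congr 1
  rw [Nat.sub_sub, Nat.cast_sub (by omega)]
  push_cast
  ring

lemma harmonic'_eq_sum_sub (n : ℕ) :
    harmonic' n = ∑ l ∈ Finset.range n, 1 / ((n : ℝ) - l) := by
  rw [harmonic'_eq_sum_range, sum_range_reflect_sub fun _ x => 1 / x]

/-- The generator of the continuous-time chain maps the harmonic numbers to the partial sums of
`∑ 1/k²`. -/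
lemma sum_harmonic'_sub_div (n : ℕ) :
    ∑ l ∈ Finset.range n, (harmonic' n - harmonic' l) / ((n : ℝ) - l) =
      ∑ k ∈ Finset.range n, 1 / ((k : ℝ) + 1) ^ 2 := by
  rw [sum_range_reflect_sub fun l x => (harmonic' n - harmonic' l) / x]
  induction n with
  | zero => simp
  | succ n ih =>
    have hterm : ∀ k ∈ Finset.range n,
        (harmonic' (n + 1) - harmonic' (n + 1 - 1 - k)) / ((k : ℝ) + 1) =
          (harmonic' n - harmonic' (n - 1 - k)) / ((k : ℝ) + 1)
            - 1 / ((n : ℝ) - k) * (1 / ((n : ℝ) + 1)) := by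
      intro k hk
      obtain ⟨d, rfl⟩ := Nat.exists_eq_add_of_lt (Finset.mem_range.1 hk)
      have h1 : k + d + 1 + 1 - 1 - k = d + 1 := by omega
      have h2 : k + d + 1 - 1 - k = d := by omega
      rw [h1, h2, harmonic'_succ (k + d + 1), harmonic'_succ d]
      push_cast
      have h3 : (k : ℝ) + d + 1 - k = d + 1 := by ring
      rw [h3]
      field_simp
      ring
    rw [Finset.sum_range_succ, Finset.sum_congr rfl hterm, Finset.sum_sub_distrib, ih,
      ← Finset.sum_mul, ← harmonic'_eq_sum_sub, Finset.sum_range_succ _ n,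
      Nat.add_sub_cancel, Nat.sub_self, harmonic'_zero, harmonic'_succ]
    field_simp
    ring

lemma tendsto_sum_one_div_add_one_sq :
    Tendsto (fun n : ℕ => ∑ k ∈ Finset.range n, 1 / ((k : ℝ) + 1) ^ 2) atTop
      (𝓝 (Real.pi ^ 2 / 6)) := by
  have h := (hasSum_nat_add_iff' 1).2 hasSum_zeta_two
  simpa using h.tendsto_sum_nat

lemma sum_one_div_add_one_sq_le (n : ℕ) :
    ∑ k ∈ Finset.range n, 1 / ((k : ℝ) + 1) ^ 2 ≤ Real.pi ^ 2 / 6 :=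
  Monotone.ge_of_tendsto
    (monotone_nat_of_le_succ fun n => by
      rw [Finset.sum_range_succ]
      exact le_add_of_nonneg_right (by positivity))
    tendsto_sum_one_div_add_one_sq n

lemma pi_sq_div_six_le_sum_add (n : ℕ) :
    Real.pi ^ 2 / 6 ≤ ∑ k ∈ Finset.range n, 1 / ((k : ℝ) + 1) ^ 2 + 2 * (1 / ((n : ℝ) + 1)) := by
  have hlim := tendsto_sum_one_div_add_one_sq.add
    ((tendsto_one_div_add_atTop_nhds_zero_nat (𝕜 := ℝ)).const_mul 2)
  rw [mul_zero, add_zero] at hlim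
  refine Antitone.le_of_tendsto (antitone_nat_of_succ_le fun n => ?_) hlim n
  rw [Finset.sum_range_succ]
  have : 2 * (1 / ((n : ℝ) + 1)) - (1 / ((n : ℝ) + 1) ^ 2 + 2 * (1 / ((n : ℝ) + 1 + 1))) =
      n / (((n : ℝ) + 1) ^ 2 * (n + 1 + 1)) := by
    field_simp
    ring
  have h0 : 0 ≤ (n : ℝ) / (((n : ℝ) + 1) ^ 2 * (n + 1 + 1)) := by positivity
  push_cast
  linarith

lemma hdP_nonneg_s16 {j i : ℕ} (hij : i ≤ j) : 0 ≤ hdP j i := by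
  have : (i : ℝ) ≤ j := by exact_mod_cast hij
  exact div_nonneg zero_le_one (mul_nonneg (by linarith) (harmonic'_nonneg _))

lemma occupation_nonneg {a : ℕ → ℕ → ℝ} (ha_diag : ∀ n : ℕ, 1 ≤ n → a n n = 1)
    (ha_rec : ∀ n i : ℕ, 1 ≤ i → i < n → a n i = ∑ j ∈ Finset.Ioc i n, a n j * hdP j i)
    {n i : ℕ} (hi : 1 ≤ i) (hin : i ≤ n) : 0 ≤ a n i := by
  induction hd : n - i using Nat.strong_induction_on generalizing i with
  | _ d ih =>
    rcases hin.eq_or_lt with rfl | hlt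
    · simp [ha_diag i hi]
    · rw [ha_rec n i hi hlt]
      refine Finset.sum_nonneg fun j hj => ?_
      have hj := Finset.mem_Ioc.1 hj
      exact mul_nonneg (ih (n - j) (by omega) (by omega) hj.2 rfl) (hdP_nonneg_s16 hj.1.le)

lemma sum_occupation_mul_sub {a : ℕ → ℕ → ℝ} (ha_diag : ∀ n : ℕ, 1 ≤ n → a n n = 1)
    (ha_rec : ∀ n i : ℕ, 1 ≤ i → i < n → a n i = ∑ j ∈ Finset.Ioc i n, a n j * hdP j i)
    (F : ℕ → ℝ) {n : ℕ} (hn : 1 ≤ n) :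
    ∑ i ∈ Finset.Icc 1 n, a n i * (F i - ∑ l ∈ Finset.Ico 1 i, hdP i l * F l) = F n := by
  have hswap : ∑ i ∈ Finset.Icc 1 n, ∑ l ∈ Finset.Ico 1 i, a n i * (hdP i l * F l) =
      ∑ l ∈ Finset.Ico 1 n, a n l * F l := by
    rw [Finset.sum_comm' (t' := Finset.Ico 1 n) (s' := fun l => Finset.Ioc l n)]
    · refine Finset.sum_congr rfl fun l hl => ?_
      have hl := Finset.mem_Ico.1 hl
      rw [ha_rec n l hl.1 hl.2, Finset.sum_mul]
      exact Finset.sum_congr rfl fun j _ => by ring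
    · intro i l
      simp only [Finset.mem_Icc, Finset.mem_Ico, Finset.mem_Ioc]
      omega
  simp only [mul_sub, Finset.sum_sub_distrib, Finset.mul_sum]
  rw [hswap, ← Finset.Ico_insert_right hn, Finset.sum_insert (by simp), ha_diag n hn]
  ring

lemma sub_sum_hdP_mul (F : ℕ → ℝ) {m : ℕ} (hm : 1 ≤ m) :
    F (m + 1) - ∑ l ∈ Finset.Ico 1 (m + 1), hdP (m + 1) l * F l =
      (∑ l ∈ Finset.range m, (F (m + 1) - F (l + 1)) / ((m : ℝ) - l)) / harmonic' m := by
  have h0 := (harmonic'_pos hm).ne'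
  have hsum : ∑ l ∈ Finset.Ico 1 (m + 1), hdP (m + 1) l * F l =
      (∑ l ∈ Finset.range m, F (l + 1) / ((m : ℝ) - l)) / harmonic' m := by
    rw [Finset.sum_Ico_eq_sum_range, Nat.add_sub_cancel, Finset.sum_div]
    refine Finset.sum_congr rfl fun l _ => ?_
    rw [hdP, Nat.add_sub_cancel, add_comm 1 l]
    push_cast
    rw [add_sub_add_right_eq_sub, one_div_mul_eq_div, div_div]
  rw [hsum, eq_div_iff h0, sub_mul, div_mul_cancel₀ _ h0]
  nth_rewrite 1 [harmonic'_eq_sum_sub]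
  rw [Finset.mul_sum, ← Finset.sum_sub_distrib]
  exact Finset.sum_congr rfl fun l _ => by ring

/-- Dynkin's formula for the continuous-time chain stopped on absorption. -/
lemma sum_occupation_mul_generator {a : ℕ → ℕ → ℝ} (ha_diag : ∀ n : ℕ, 1 ≤ n → a n n = 1)
    (ha_rec : ∀ n i : ℕ, 1 ≤ i → i < n → a n i = ∑ j ∈ Finset.Ioc i n, a n j * hdP j i)
    (f : ℕ → ℝ) (hf : f 0 = 0) {n : ℕ} (hn : 1 ≤ n) :
    ∑ i ∈ Finset.Icc 2 n, a n i / harmonic' (i - 1) *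
      ∑ l ∈ Finset.range (i - 1), (f (i - 1) - f l) / (((i - 1 : ℕ) : ℝ) - l) = f (n - 1) := by
  rw [← sum_occupation_mul_sub ha_diag ha_rec (fun i => f (i - 1)) hn,
    ← Finset.add_sum_Ioc_eq_sum_Icc hn]
  simp only [Nat.sub_self, hf, Finset.Ico_self, Finset.sum_empty, sub_zero, mul_zero, zero_add]
  refine Finset.sum_congr rfl fun i hi => ?_
  obtain ⟨m, rfl⟩ : ∃ m, i = m + 1 + 1 :=
    ⟨i - 2, by have := (Finset.mem_Ioc.1 hi).1; omega⟩
  rw [sub_sum_hdP_mul (fun i => f (i - 1)) (m := m + 1) (by omega)]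
  simp only [Nat.add_sub_cancel]
  ring

lemma sum_one_sub_inv_sub_div (n : ℕ) :
    ∑ l ∈ Finset.range n,
      ((1 - 1 / ((n : ℝ) + 1)) - (1 - 1 / ((l : ℝ) + 1))) / ((n : ℝ) - l) =
      harmonic' n * (1 / ((n : ℝ) + 1)) := by
  rw [harmonic'_eq_sum_range, Finset.sum_mul]
  refine Finset.sum_congr rfl fun l hl => ?_
  have : (l : ℝ) < n := by exact_mod_cast Finset.mem_range.1 hl
  have : (n : ℝ) - l ≠ 0 := by linarith
  field_simp
  ring

lemma log_le_harmonic'_sub_one {n : ℕ} (hn : 1 ≤ n) : Real.log n ≤ harmonic' (n - 1) := by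
  obtain ⟨m, rfl⟩ := Nat.exists_eq_add_of_le' hn
  rw [Nat.add_sub_cancel, harmonic'_eq_harmonic]
  exact log_add_one_le_harmonic m

lemma harmonic'_sub_one_le_one_add_log {n : ℕ} (hn : 1 ≤ n) :
    harmonic' (n - 1) ≤ 1 + Real.log n := by
  obtain ⟨m, rfl⟩ := Nat.exists_eq_add_of_le' hn
  have h : harmonic' m ≤ harmonic' (m + 1) := by
    rw [harmonic'_succ]
    exact le_add_of_nonneg_right (by positivity)
  rw [Nat.add_sub_cancel]
  refine h.trans ?_
  rw [harmonic'_eq_harmonic]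
  exact harmonic_le_one_add_log (m + 1)

theorem hd_mean_absorption_time
    (a : ℕ → ℕ → ℝ)
    (ha_diag : ∀ n : ℕ, 1 ≤ n → a n n = 1)
    (ha_rec : ∀ n i : ℕ, 1 ≤ i → i < n →
      a n i = ∑ j ∈ Finset.Ioc i n, a n j * hdP j i) :
    ∃ C : ℝ, ∀ n : ℕ, 2 ≤ n →
      |∑ i ∈ Finset.Icc 2 n, a n i / harmonic' (i - 1)
        - 6 / Real.pi ^ 2 * Real.log n| ≤ C := by
  refine ⟨6 / Real.pi ^ 2 * 3, fun n hn => ?_⟩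
  have hn1 : 1 ≤ n := by omega
  set w : ℕ → ℝ := fun i => a n i / harmonic' (i - 1)
  have hw0 : ∀ i ∈ Finset.Icc 2 n, 0 ≤ w i := fun i hi => by
    have hi := Finset.mem_Icc.1 hi
    exact div_nonneg (occupation_nonneg ha_diag ha_rec (by omega) hi.2) (harmonic'_nonneg _)
  have hharm := sum_occupation_mul_generator ha_diag ha_rec harmonic' harmonic'_zero hn1
  have hinv := sum_occupation_mul_generator ha_diag ha_rec
    (fun m => 1 - 1 / ((m : ℝ) + 1)) (by simp) hn1
  simp only [sum_harmonic'_sub_div] at hharm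
  simp only [sum_one_sub_inv_sub_div] at hinv
  have hlower : harmonic' (n - 1) ≤ Real.pi ^ 2 / 6 * ∑ i ∈ Finset.Icc 2 n, w i := by
    rw [← hharm, Finset.mul_sum]
    refine Finset.sum_le_sum fun i hi => ?_
    rw [mul_comm (Real.pi ^ 2 / 6)]
    exact mul_le_mul_of_nonneg_left (sum_one_div_add_one_sq_le _) (hw0 i hi)
  have hupper : Real.pi ^ 2 / 6 * ∑ i ∈ Finset.Icc 2 n, w i ≤ harmonic' (n - 1) + 2 := by
    have hle : Real.pi ^ 2 / 6 * ∑ i ∈ Finset.Icc 2 n, w i ≤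
        harmonic' (n - 1) + 2 * (1 - 1 / (((n - 1 : ℕ) : ℝ) + 1)) := by
      rw [← hharm, ← hinv, Finset.mul_sum, Finset.mul_sum, ← Finset.sum_add_distrib]
      refine Finset.sum_le_sum fun i hi => ?_
      have h1 : 1 ≤ harmonic' (i - 1) :=
        one_le_harmonic' (by have := (Finset.mem_Icc.1 hi).1; omega)
      calc Real.pi ^ 2 / 6 * w i
          ≤ (∑ k ∈ Finset.range (i - 1), 1 / ((k : ℝ) + 1) ^ 2
              + 2 * (harmonic' (i - 1) * (1 / (((i - 1 : ℕ) : ℝ) + 1)))) * w i := by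
            refine mul_le_mul_of_nonneg_right ((pi_sq_div_six_le_sum_add (i - 1)).trans ?_)
              (hw0 i hi)
            gcongr
            exact le_mul_of_one_le_left (by positivity) h1
        _ = _ := by ring
    have : 0 ≤ 1 / (((n - 1 : ℕ) : ℝ) + 1) := by positivity
    linarith
  have hlog1 := log_le_harmonic'_sub_one hn1
  have hlog2 := harmonic'_sub_one_le_one_add_log hn1
  have hpi : 0 < 6 / Real.pi ^ 2 := by positivity
  have hT : ∑ i ∈ Finset.Icc 2 n, w i =
      6 / Real.pi ^ 2 * (Real.pi ^ 2 / 6 * ∑ i ∈ Finset.Icc 2 n, w i) := by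
    field_simp
  rw [hT, ← mul_sub, abs_mul, abs_of_pos hpi]
  refine mul_le_mul_of_nonneg_left (abs_le.2 ⟨?_, ?_⟩) hpi.le <;> linarith
end
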